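/- Let φ(z) = z², so that p_{N,R}^φ is the Fejér-type density estimator. Suppose the true density p ∈ L¹(ℝ^D) ∩ L²(ℝ^D) is supersmooth of order α > 0, i.e. its Fourier transform satisfies |p̂(x)| ≤ C₁ exp(−C₂ Σ_{j=1}^D |x_j|^α) almost everywhere for some constants C₁, C₂ > 0. Then there exist universal constants C₁', C₂' such that for all R ≥ C₁' and all N ≥ 1, MISE(p_{N,R}^φ, p) ≤ C₂' ( 1/R² + R^D / N ). -/

import Mathlib

/-!
The estimator is `N⁻¹ ∑ᵢ K_R(k - kᵢ)`, where `K_R` is a product of rescaled Fejér kernels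
`u ↦ (R / A) (sin (R u) / (R u))²`, each a probability density bounded by `R / A`. For fixed `k` the
mean squared error splits into squared bias and variance (`pointwise_mse`).

*Variance.* It is at most `N⁻¹ E[K_R(k - X)²] ≤ N⁻¹ (R / A)^D E[K_R(k - X)]`, and the last expectation
integrates to `1` in `k`. This gives the term `R^D / N` with constant `A^{-D}`.

*Bias.* The bias `K_R ⋆ p - p` has Fourier transform `(K̂_R - 1) p̂`. In one dimension,
`1 - K̂_R(t) = ∫ K_R(u) (1 - cos (t u)) du`; bounding `sin² (R u)` by `1` and writing
`1 - cos (t u) = 2 sin² (t u / 2)` turns the integrand into another Fejér kernel, whose integral is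
`|t| / R` (`norm_one_sub_kernFT_le`). Taking products gives `|1 - K̂_R(t)| ≤ ∑ⱼ |tⱼ| / R`. Since `p` is
supersmooth, the transform of the bias is at most `C₁ / R` times an integrable and square-integrable
envelope (`bias_bound`), and Plancherel's identity (`integral_sq_eq_charFun`) gives the term `1 / R²`.
Plancherel is proved for integrable functions with integrable Fourier transform, from almost-everywhere
Fourier inversion tested against smooth compactly supported functions.
-/
open MeasureTheory Real Finset

/-- `sin z / z`, with the convention that its value at `z = 0` is `1`. -/
noncomputable def sincLike (z : ℝ) : ℝ := if z = 0 then 1 else Real.sin z / z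

/-- The generalized Fourier density estimator, with `A` passed explicitly. -/
noncomputable def pEst (D N : ℕ) (φ : ℝ → ℝ) (A R : ℝ)
    (ks : Fin N → Fin D → ℝ) (k : Fin D → ℝ) : ℝ :=
  R ^ D / (N * A ^ D) *
    ∑ i : Fin N, ∏ j : Fin D, φ (sincLike (R * (k j - ks i j)))

/-- The law of an i.i.d. sample of size `N` from the distribution on `ℝ^D` with density `p`. -/
noncomputable def sampleMeasure (D N : ℕ) (p : (Fin D → ℝ) → ℝ) :
    Measure (Fin N → Fin D → ℝ) :=
  Measure.pi fun _ : Fin N => volume.withDensity fun x => ENNReal.ofReal (p x)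

/-- The mean integrated squared error of the generalized Fourier density estimator. -/
noncomputable def MISE (D N : ℕ) (φ : ℝ → ℝ) (A R : ℝ) (p : (Fin D → ℝ) → ℝ) : ℝ :=
  ∫ ks : Fin N → Fin D → ℝ,
    (∫ k : Fin D → ℝ, (pEst D N φ A R ks k - p k) ^ 2) ∂(sampleMeasure D N p)

/-- The Fourier transform `p̂(t) = ∫ e^{i t·x} p(x) dx` of the density `p` on `ℝ^D`. -/
noncomputable def charFun (D : ℕ) (p : (Fin D → ℝ) → ℝ) (t : Fin D → ℝ) : ℂ :=
  ∫ x : Fin D → ℝ, Complex.exp (Complex.I * ((∑ j : Fin D, t j * x j : ℝ) : ℂ)) * (p x : ℂ)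



/-! ### Plancherel's identity for integrable functions with integrable Fourier transform -/

section Plancherel

open FourierTransform ContDiff

variable {V : Type*} [NormedAddCommGroup V] [InnerProductSpace ℝ V] [FiniteDimensional ℝ V]
  [MeasurableSpace V] [BorelSpace V]

lemma continuous_fourierInv {f : V → ℂ} (hf : Integrable f) : Continuous (𝓕⁻ f) := by
  rw [Real.fourierInv_eq_fourier_comp_neg]
  exact VectorFourier.fourierIntegral_continuous Real.continuous_fourierChar
    (by exact continuous_inner) hf.comp_neg

/-- Almost-everywhere Fourier inversion without continuity of `f`: by self-adjointness of `𝓕` and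
`𝓕⁻`, both sides have the same pairing with every smooth compactly supported function. -/
lemma ae_eq_fourierInv_fourier {f : V → ℂ} (hf : Integrable f) (hf' : Integrable (𝓕 f)) :
    ∀ᵐ x, f x = 𝓕⁻ (𝓕 f) x := by
  refine ae_eq_of_integral_contDiff_smul_eq hf.locallyIntegrable
    (continuous_fourierInv hf').locallyIntegrable fun g hg hgc => ?_
  have hgc' : HasCompactSupport (fun x => (g x : ℂ)) := hgc.comp_left (g := fun x : ℝ => (x : ℂ)) rfl
  have hg' : ContDiff ℝ ∞ (fun x => (g x : ℂ)) := Complex.ofRealCLM.contDiff.comp hg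
  let G : SchwartzMap V ℂ := hgc'.toSchwartzMap hg'
  have hG : ∀ x, G x = (g x : ℂ) := fun x => rfl
  have e1 : ∫ x, f x * 𝓕 (𝓕⁻ G : SchwartzMap V ℂ) x = ∫ x, 𝓕 f x * (𝓕⁻ G : SchwartzMap V ℂ) x := by
    have := VectorFourier.integral_fourierIntegral_smul_eq_flip (L := innerₗ V)
      Real.continuous_fourierChar continuous_inner hf
      ((𝓕⁻ G : SchwartzMap V ℂ).integrable (μ := volume))
    rw [flip_innerₗ] at this
    rw [SchwartzMap.fourier_coe]
    exact this.symm
  have e2 : ∫ x, 𝓕 f x * (𝓕⁻ G : SchwartzMap V ℂ) x = ∫ x, 𝓕⁻ (𝓕 f) x * G x := by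
    have := VectorFourier.integral_fourierIntegral_smul_eq_flip (L := -innerₗ V)
      Real.continuous_fourierChar (by simpa using! continuous_inner.neg) hf'
      (G.integrable (μ := volume))
    rw [SchwartzMap.fourierInv_coe]
    rw [show (-innerₗ V).flip = -innerₗ V by ext x y; simp [real_inner_comm]] at this
    exact this.symm
  simp only [FourierTransform.fourier_fourierInv_eq, hG] at e1 e2
  simp only [Complex.real_smul]
  simpa only [mul_comm] using e1.trans e2

/-- Plancherel's identity: pair `𝓕 f` with itself, move one `𝓕` across, and invert. -/
lemma integral_norm_sq_eq_fourier {f : V → ℂ} (hf : Integrable f) (hf' : Integrable (𝓕 f)) :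
    ∫ x, ‖f x‖ ^ 2 = ∫ x, ‖𝓕 f x‖ ^ 2 := by
  have h := VectorFourier.integral_sesq_fourierIntegral_eq_neg_flip (innerSL ℂ)
    (L := innerₗ V) Real.continuous_fourierChar continuous_inner hf hf'
  have h2 : ∫ x, inner ℂ (𝓕 f x) (𝓕 f x) = ∫ x, inner ℂ (f x) (𝓕⁻ (𝓕 f) x) := by
    rw [flip_innerₗ] at h
    exact h
  have h3 : ∫ x, inner ℂ (f x) (𝓕⁻ (𝓕 f) x) = ∫ x, inner ℂ (f x) (f x) := by
    apply integral_congr_ae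
    filter_upwards [ae_eq_fourierInv_fourier hf hf'] with x hx
    rw [← hx]
  rw [h3] at h2
  apply Complex.ofRealLI.injective
  simpa [← LinearIsometry.integral_comp_comm, inner_self_eq_norm_sq_to_K] using h2.symm

end Plancherel

/-- Plancherel's identity for `charFun`; the factor `(2π)^D` comes from the normalisation
of the frequency variable. -/
lemma integral_sq_eq_charFun (D : ℕ) {g : (Fin D → ℝ) → ℝ} (hg : Integrable g)
    (hg' : Integrable (_root_.charFun D g)) :
    ∫ x, g x ^ 2 = ((2 * π) ^ D)⁻¹ * ∫ t, ‖_root_.charFun D g t‖ ^ 2 := by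
  let f : EuclideanSpace ℝ (Fin D) → ℂ := fun x => (g (WithLp.ofLp x) : ℂ)
  have emb := (MeasurableEquiv.toLp 2 (Fin D → ℝ)).symm.measurableEmbedding
  have mp := PiLp.volume_preserving_ofLp (Fin D)
  have hf : Integrable f :=
    (mp.integrable_comp_emb emb (g := fun x => (g x : ℂ))).2 hg.ofReal
  have hF : ∀ ξ, FourierTransform.fourier f ξ = _root_.charFun D g ((-(2 * π)) • WithLp.ofLp ξ) := by
    intro ξ
    rw [Real.fourier_eq', _root_.charFun, ← mp.integral_comp emb]
    congr 1
    ext x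
    simp only [f, smul_eq_mul]
    congr 2
    simp only [PiLp.inner_apply, Pi.smul_apply, smul_eq_mul, RCLike.inner_apply, conj_trivial,
      Complex.ofReal_mul, Complex.ofReal_neg, Complex.ofReal_sum, mul_assoc, ← Finset.mul_sum]
    simp only [Finset.mul_sum, Finset.sum_mul]
    refine Finset.sum_congr rfl fun i _ => ?_
    push_cast; ring
  have hne : (-(2 * π)) ≠ 0 := by simp [Real.pi_ne_zero]
  have hF' : Integrable (FourierTransform.fourier f) := by
    have : FourierTransform.fourier f = (fun x => _root_.charFun D g ((-(2 * π)) • x)) ∘ WithLp.ofLp := by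
      ext ξ; exact hF ξ
    rw [this, mp.integrable_comp_emb emb]
    exact hg'.comp_smul hne
  have h := integral_norm_sq_eq_fourier hf hF'
  have h1 : ∫ x, ‖f x‖ ^ 2 = ∫ x, g x ^ 2 := by
    rw [← mp.integral_comp emb]
    simp [f]
  have h2 : ∫ x, ‖FourierTransform.fourier f x‖ ^ 2 =
      ∫ t, ‖_root_.charFun D g ((-(2 * π)) • t)‖ ^ 2 := by
    rw [← mp.integral_comp emb]
    simp [hF]
  rw [← h1, h, h2, Measure.integral_comp_smul volume (fun t => ‖_root_.charFun D g t‖ ^ 2)]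
  simp [abs_of_pos Real.pi_pos]

/-! ### The Fejér kernel -/

lemma sincLike_eq_sinc : sincLike = Real.sinc := by
  ext z; simp [sincLike, Real.sinc_apply]

lemma continuous_sincLike : Continuous sincLike := sincLike_eq_sinc ▸ Real.continuous_sinc

lemma sincLike_neg (z : ℝ) : sincLike (-z) = sincLike z := by simp [sincLike_eq_sinc]

lemma sincLike_mul_sq (z : ℝ) : (sincLike z * z) ^ 2 = Real.sin z ^ 2 := by
  rcases eq_or_ne z 0 with rfl | hz
  · simp
  · simp [sincLike, hz]

lemma sincLike_sq_le_one (z : ℝ) : sincLike z ^ 2 ≤ 1 := by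
  rw [sincLike_eq_sinc, sq_le_one_iff_abs_le_one]
  exact Real.abs_sinc_le_one z

lemma integrable_sincLike_sq : Integrable fun z => sincLike z ^ 2 := by
  refine (integrable_inv_one_add_sq.const_mul 2).mono'
    (continuous_sincLike.pow 2).aestronglyMeasurable (Filter.Eventually.of_forall fun z => ?_)
  rw [Real.norm_of_nonneg (sq_nonneg _), ← div_eq_mul_inv, le_div_iff₀ (by positivity)]
  have h1 := sincLike_sq_le_one z
  have h2 := sincLike_mul_sq z
  have h3 := Real.sin_sq_le_one z
  nlinarith

/-- The normalising constant `A = ∫ (sin z / z)² dz`. -/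
noncomputable def fejerConst : ℝ := ∫ z : ℝ, sincLike z ^ 2

lemma fejerConst_pos : 0 < fejerConst :=
  integral_pos_of_integrable_nonneg_nonzero (x := 0) (continuous_sincLike.pow 2)
    integrable_sincLike_sq (fun z => sq_nonneg _) (by simp [sincLike])

/-- The rescaled one-dimensional Fejér kernel, of total mass one. -/
noncomputable def kern1 (R u : ℝ) : ℝ := R / fejerConst * sincLike (R * u) ^ 2

lemma continuous_kern1 (R : ℝ) : Continuous (kern1 R) :=
  continuous_const.mul ((continuous_sincLike.comp (continuous_const.mul continuous_id)).pow 2)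

lemma kern1_nonneg {R : ℝ} (hR : 0 < R) (u : ℝ) : 0 ≤ kern1 R u :=
  mul_nonneg (div_nonneg hR.le fejerConst_pos.le) (sq_nonneg _)

lemma kern1_le {R : ℝ} (hR : 0 < R) (u : ℝ) : kern1 R u ≤ R / fejerConst :=
  mul_le_of_le_one_right (div_nonneg hR.le fejerConst_pos.le) (sincLike_sq_le_one _)

lemma kern1_neg (R u : ℝ) : kern1 R (-u) = kern1 R u := by
  simp [kern1, sincLike_neg]

lemma integrable_kern1 {R : ℝ} (hR : 0 < R) : Integrable (kern1 R) :=
  (integrable_sincLike_sq.comp_mul_left' hR.ne').const_mul _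

lemma integral_kern1 {R : ℝ} (hR : 0 < R) : ∫ u, kern1 R u = 1 := by
  have hA := fejerConst_pos
  simp only [kern1]
  rw [integral_const_mul, Measure.integral_comp_mul_left (fun z => sincLike z ^ 2) R]
  change _ * (_ • fejerConst) = _
  rw [abs_of_pos (by positivity), smul_eq_mul]
  field_simp

/-- Pointwise form of the identity `1 - cos (t u) = 2 sin² (t u / 2)`, after bounding the Fejér
kernel by `1 / (A R u²)`: the right-hand side is again a rescaled Fejér kernel. -/
lemma kern1_mul_one_sub_cos_le {R : ℝ} (hR : 0 < R) (t u : ℝ) :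
    kern1 R u * (1 - Real.cos (t * u)) ≤
      (t ^ 2 / (2 * fejerConst * R)) * sincLike (t / 2 * u) ^ 2 := by
  have hA := fejerConst_pos
  rcases eq_or_ne u 0 with rfl | hu
  · simp; positivity
  have h1 := sincLike_mul_sq (R * u)
  have h2 := sincLike_mul_sq (t / 2 * u)
  have h3 : 1 - Real.cos (t * u) = 2 * Real.sin (t / 2 * u) ^ 2 := by
    have := Real.cos_two_mul (t / 2 * u)
    rw [show 2 * (t / 2 * u) = t * u by ring] at this
    rw [this, Real.cos_sq']; ring
  have h4 : sincLike (R * u) ^ 2 ≤ 1 / (R * u) ^ 2 := by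
    rw [le_div_iff₀ (by positivity), ← mul_pow, h1]; exact Real.sin_sq_le_one _
  calc kern1 R u * (1 - Real.cos (t * u))
      = R / fejerConst * sincLike (R * u) ^ 2 * (2 * (sincLike (t / 2 * u) * (t / 2 * u)) ^ 2) := by
        rw [h3, h2, kern1]
    _ ≤ R / fejerConst * (1 / (R * u) ^ 2) * (2 * (sincLike (t / 2 * u) * (t / 2 * u)) ^ 2) := by
        gcongr
    _ = _ := by field_simp

/-- The Fourier transform of the one-dimensional kernel. -/
noncomputable def kernFT (R t : ℝ) : ℂ :=
  ∫ u : ℝ, Complex.exp (Complex.I * ((t * u : ℝ) : ℂ)) * (kern1 R u : ℂ)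

lemma norm_exp_I_mul (x : ℝ) : ‖Complex.exp (Complex.I * (x : ℂ))‖ = 1 := by
  rw [mul_comm]; exact Complex.norm_exp_ofReal_mul_I x

lemma norm_kernFT_le {R : ℝ} (hR : 0 < R) (t : ℝ) : ‖kernFT R t‖ ≤ 1 := by
  refine (norm_integral_le_integral_norm _).trans_eq ?_
  rw [← integral_kern1 hR]
  congr 1; ext u
  rw [norm_mul, norm_exp_I_mul, one_mul, Complex.norm_real, Real.norm_of_nonneg (kern1_nonneg hR u)]

lemma integrable_exp_mul_kern1 {R : ℝ} (hR : 0 < R) (t : ℝ) :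
    Integrable fun u : ℝ => Complex.exp (Complex.I * ((t * u : ℝ) : ℂ)) * (kern1 R u : ℂ) := by
  refine (integrable_kern1 hR).ofReal.bdd_mul (c := 1)
    (Continuous.aestronglyMeasurable (by fun_prop))
    (Filter.Eventually.of_forall fun u => (norm_exp_I_mul _).le)

/-- The kernel is even, so only the cosine part of the exponential contributes. -/
lemma kernFT_eq_cos {R : ℝ} (hR : 0 < R) (t : ℝ) :
    kernFT R t = ((∫ u, kern1 R u * Real.cos (t * u) : ℝ) : ℂ) := by
  have h1 : kernFT R t
      = ∫ u : ℝ, Complex.exp (Complex.I * ((t * (-u) : ℝ) : ℂ)) * (kern1 R u : ℂ) := by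
    rw [kernFT, ← integral_neg_eq_self]
    simp only [kern1_neg]
  have h2 : kernFT R t + kernFT R t = 2 * ((∫ u, kern1 R u * Real.cos (t * u) : ℝ) : ℂ) := by
    nth_rewrite 2 [h1]
    rw [kernFT, ← integral_add (integrable_exp_mul_kern1 hR t)
      (by simpa [kern1_neg] using (integrable_exp_mul_kern1 hR t).comp_neg), ← integral_complex_ofReal,
      ← integral_const_mul]
    congr 1; ext u
    push_cast
    rw [Complex.cos]
    rw [show Complex.I * (t * -(u : ℂ)) = -(t * u) * Complex.I by ring,
      show Complex.I * (t * (u : ℂ)) = t * u * Complex.I by ring]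
    ring
  linear_combination h2 / 2

/-- The transform of the Fejér kernel has a kink at the origin, so the deviation from `1` is of
first order in `t / R`; this is what limits the squared bias to `1 / R²`. -/
lemma norm_one_sub_kernFT_le {R : ℝ} (hR : 0 < R) (t : ℝ) : ‖1 - kernFT R t‖ ≤ |t| / R := by
  have hA := fejerConst_pos
  have hc : Integrable fun u => kern1 R u * Real.cos (t * u) :=
    (integrable_kern1 hR).mul_bdd (c := 1) (Continuous.aestronglyMeasurable (by fun_prop))
      (Filter.Eventually.of_forall fun u => Real.abs_cos_le_one _)
  have h1 : 1 - ∫ u, kern1 R u * Real.cos (t * u) = ∫ u, kern1 R u * (1 - Real.cos (t * u)) := by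
    calc 1 - ∫ u, kern1 R u * Real.cos (t * u)
        = (∫ u, kern1 R u) - ∫ u, kern1 R u * Real.cos (t * u) := by rw [integral_kern1 hR]
      _ = ∫ u, (kern1 R u - kern1 R u * Real.cos (t * u)) :=
        (integral_sub (integrable_kern1 hR) hc).symm
      _ = _ := by congr 1; ext u; ring
  have h0 : 0 ≤ ∫ u, kern1 R u * (1 - Real.cos (t * u)) :=
    integral_nonneg fun u => mul_nonneg (kern1_nonneg hR u) (by linarith [Real.cos_le_one (t * u)])
  rw [kernFT_eq_cos hR, ← Complex.ofReal_one, ← Complex.ofReal_sub, Complex.norm_real, h1,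
    Real.norm_of_nonneg h0]
  rcases eq_or_ne t 0 with rfl | ht
  · simp
  calc ∫ u, kern1 R u * (1 - Real.cos (t * u))
      ≤ ∫ u, (t ^ 2 / (2 * fejerConst * R)) * sincLike (t / 2 * u) ^ 2 := by
        refine integral_mono ?_ ?_ (kern1_mul_one_sub_cos_le hR t)
        · exact ((integrable_kern1 hR).sub hc).congr (Filter.Eventually.of_forall fun u => by
            simp only [Pi.sub_apply]; ring)
        · exact (integrable_sincLike_sq.comp_mul_left' (by positivity)).const_mul _
    _ = (t ^ 2 / (2 * fejerConst * R)) * (|(t / 2)⁻¹| * fejerConst) := by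
        rw [integral_const_mul, Measure.integral_comp_mul_left (fun z => sincLike z ^ 2)]
        rfl
    _ = |t| / R := by
        rw [← sq_abs t, abs_inv, abs_div, abs_two]
        have : 0 < |t| := abs_pos.2 ht
        field_simp

/-- The rescaled `D`-dimensional product Fejér kernel. -/
noncomputable def kern (D : ℕ) (R : ℝ) (u : Fin D → ℝ) : ℝ := ∏ j, kern1 R (u j)

section Kern

variable (D : ℕ) {R : ℝ}

lemma kern_nonneg (hR : 0 < R) (u : Fin D → ℝ) : 0 ≤ kern D R u :=
  Finset.prod_nonneg fun j _ => kern1_nonneg hR (u j)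

lemma kern_le (hR : 0 < R) (u : Fin D → ℝ) : kern D R u ≤ (R / fejerConst) ^ D := by
  refine (Finset.prod_le_prod (fun j _ => kern1_nonneg hR (u j))
    fun j _ => kern1_le hR (u j)).trans_eq ?_
  rw [Finset.prod_const, Finset.card_univ, Fintype.card_fin]

lemma integrable_kern (hR : 0 < R) : Integrable (kern D R) :=
  Integrable.fintype_prod (f := fun _ : Fin D => kern1 R) fun _ => integrable_kern1 hR

lemma integral_kern (hR : 0 < R) : ∫ u, kern D R u = 1 := by
  simp only [kern]
  rw [integral_fintype_prod_volume_eq_prod (fun _ : Fin D => kern1 R)]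
  simp [integral_kern1 hR]

lemma charFun_kern (t : Fin D → ℝ) : _root_.charFun D (kern D R) t = ∏ j, kernFT R (t j) := by
  simp only [kernFT]
  rw [← integral_fintype_prod_volume_eq_prod
    (fun (j : Fin D) (u : ℝ) => Complex.exp (Complex.I * ((t j * u : ℝ) : ℂ)) * (kern1 R u : ℂ))]
  simp only [_root_.charFun, kern, Finset.prod_mul_distrib, ← Complex.exp_sum]
  push_cast
  simp [Finset.mul_sum]

lemma norm_one_sub_charFun_kern_le (hR : 0 < R) (t : Fin D → ℝ) :
    ‖1 - _root_.charFun D (kern D R) t‖ ≤ (∑ j, |t j|) / R := by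
  rw [charFun_kern]
  -- Telescoping: `1 - a b = (1 - a) + a (1 - b)` with all factors of norm at most one.
  have key : ∀ s : Finset (Fin D), ‖∏ j ∈ s, kernFT R (t j)‖ ≤ 1 ∧
      ‖1 - ∏ j ∈ s, kernFT R (t j)‖ ≤ (∑ j ∈ s, |t j|) / R := by
    intro s
    induction s using Finset.induction_on with
    | empty => simp
    | insert a s ha ih =>
      rw [Finset.prod_insert ha, Finset.sum_insert ha, norm_mul]
      refine ⟨mul_le_one₀ (norm_kernFT_le hR _) (norm_nonneg _) ih.1, ?_⟩
      have e : 1 - kernFT R (t a) * ∏ j ∈ s, kernFT R (t j) =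
          (1 - kernFT R (t a)) + kernFT R (t a) * (1 - ∏ j ∈ s, kernFT R (t j)) := by ring
      rw [e, add_div]
      refine (norm_add_le _ _).trans (add_le_add (norm_one_sub_kernFT_le hR _) ?_)
      rw [norm_mul]
      exact (mul_le_of_le_one_left (norm_nonneg _) (norm_kernFT_le hR _)).trans ih.2
  exact (key Finset.univ).2

end Kern

/-! ### The bias -/

/-- The convolution of `p` with the Fejér kernel, i.e. the mean of the estimator. -/
noncomputable def smoothed (D : ℕ) (R : ℝ) (p : (Fin D → ℝ) → ℝ) (k : Fin D → ℝ) : ℝ :=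
  ∫ x, p x * kern D R (k - x)

lemma integrable_conv_integrand (D : ℕ) {R : ℝ} (hR : 0 < R) {p : (Fin D → ℝ) → ℝ}
    (hp : Integrable p) :
    Integrable (fun z : (Fin D → ℝ) × (Fin D → ℝ) => p z.2 * kern D R (z.1 - z.2))
      (volume.prod volume) :=
  hp.convolution_integrand (ContinuousLinearMap.mul ℝ ℝ) (integrable_kern D hR)

lemma integrable_smoothed (D : ℕ) {R : ℝ} (hR : 0 < R) {p : (Fin D → ℝ) → ℝ}
    (hp : Integrable p) : Integrable (smoothed D R p) :=
  (integrable_conv_integrand D hR hp).integral_prod_left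

lemma continuous_phase (D : ℕ) (t : Fin D → ℝ) : Continuous fun x : Fin D → ℝ =>
    Complex.exp (Complex.I * ((∑ j : Fin D, t j * x j : ℝ) : ℂ)) := by
  fun_prop

lemma integrable_phase_mul (D : ℕ) (t : Fin D → ℝ) {f : (Fin D → ℝ) → ℝ} (hf : Integrable f) :
    Integrable fun x : Fin D → ℝ =>
      Complex.exp (Complex.I * ((∑ j : Fin D, t j * x j : ℝ) : ℂ)) * (f x : ℂ) :=
  hf.ofReal.bdd_mul (c := 1) (continuous_phase D t).aestronglyMeasurable
    (Filter.Eventually.of_forall fun _ => (norm_exp_I_mul _).le)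

lemma continuous_charFun (D : ℕ) {f : (Fin D → ℝ) → ℝ} (hf : Integrable f) :
    Continuous (_root_.charFun D f) := by
  refine continuous_of_dominated (bound := fun x => ‖f x‖)
    (fun t => (integrable_phase_mul D t hf).aestronglyMeasurable) (fun t => ?_) hf.norm ?_
  · refine Filter.Eventually.of_forall fun x => ?_
    rw [norm_mul, norm_exp_I_mul, one_mul, Complex.norm_real]
  · refine Filter.Eventually.of_forall fun x => ?_
    fun_prop

lemma charFun_smoothed (D : ℕ) {R : ℝ} (hR : 0 < R) {p : (Fin D → ℝ) → ℝ}
    (hp : Integrable p) (t : Fin D → ℝ) :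
    _root_.charFun D (smoothed D R p) t =
      _root_.charFun D (kern D R) t * _root_.charFun D p t := by
  let e : (Fin D → ℝ) → ℂ := fun x =>
    Complex.exp (Complex.I * ((∑ j : Fin D, t j * x j : ℝ) : ℂ))
  have he : ∀ x y, e (x + y) = e x * e y := by
    intro x y
    simp only [e, ← Complex.exp_add]
    congr 1
    simp only [Pi.add_apply, mul_add, Finset.sum_add_distrib]
    push_cast; ring
  have hint : Integrable (fun z : (Fin D → ℝ) × (Fin D → ℝ) =>
      e z.1 * ((p z.2 * kern D R (z.1 - z.2) : ℝ) : ℂ)) (volume.prod volume) :=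
    (integrable_conv_integrand D hR hp).ofReal.bdd_mul (c := 1)
      ((continuous_phase D t).comp continuous_fst).aestronglyMeasurable
      (Filter.Eventually.of_forall fun _ => (norm_exp_I_mul _).le)
  calc _root_.charFun D (smoothed D R p) t
      = ∫ k, ∫ x, e k * ((p x * kern D R (k - x) : ℝ) : ℂ) := by
        simp only [_root_.charFun, smoothed]
        congr 1; ext k
        rw [← integral_complex_ofReal, ← integral_const_mul]
    _ = ∫ x, ∫ k, e k * ((p x * kern D R (k - x) : ℝ) : ℂ) := integral_integral_swap hint
    _ = ∫ x, _root_.charFun D (kern D R) t * (e x * (p x : ℂ)) := by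
        congr 1; ext x
        rw [← integral_add_right_eq_self _ x]
        simp only [he, add_sub_cancel_right]
        rw [_root_.charFun, ← integral_mul_const]
        congr 1; ext k
        simp only [e]; push_cast; ring
    _ = _ := by rw [integral_const_mul]; rfl

lemma charFun_sub (D : ℕ) {f g : (Fin D → ℝ) → ℝ} (hf : Integrable f) (hg : Integrable g)
    (t : Fin D → ℝ) : _root_.charFun D (fun x => f x - g x) t =
      _root_.charFun D f t - _root_.charFun D g t := by
  simp only [_root_.charFun]
  rw [← integral_sub (integrable_phase_mul D t hf) (integrable_phase_mul D t hg)]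
  congr 1; ext x; push_cast; ring

lemma integrable_one_add_abs_pow_mul_exp {α c : ℝ} (hα : 0 < α) (hc : 0 < c) (n : ℕ) :
    Integrable fun t : ℝ => (1 + |t|) ^ n * Real.exp (-c * |t| ^ α) := by
  have hpos : IntegrableOn (fun t : ℝ => (1 + |t|) ^ n * Real.exp (-c * |t| ^ α)) (Set.Ioi 0) := by
    have h0 := integrableOn_rpow_mul_exp_neg_mul_rpow (s := 0) (by norm_num) hα hc
    have hn := integrableOn_rpow_mul_exp_neg_mul_rpow (s := n)
      (by linarith [n.cast_nonneg (α := ℝ)]) hα hc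
    refine Integrable.mono' ((h0.add hn).const_mul (2 ^ (n - 1)))
      (Measurable.aestronglyMeasurable (by fun_prop)) ?_
    filter_upwards [ae_restrict_mem measurableSet_Ioi] with t ht
    have ht0 : (0 : ℝ) ≤ t := le_of_lt ht
    rw [Real.norm_of_nonneg (by positivity), abs_of_nonneg ht0]
    have h := add_pow_le zero_le_one ht0 n
    simp only [Pi.add_apply, Real.rpow_zero, Real.rpow_natCast, ← add_mul, ← mul_assoc]
    rw [one_pow] at h
    gcongr
  rw [← integrableOn_univ, ← Set.Iio_union_Ici (a := (0 : ℝ)), integrableOn_union,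
    integrableOn_Ici_iff_integrableOn_Ioi]
  refine ⟨?_, hpos⟩
  rw [← (Measure.measurePreserving_neg (volume : Measure ℝ)).integrableOn_comp_preimage
    (Homeomorph.neg ℝ).measurableEmbedding]
  simpa [Function.comp_def] using hpos

/-- The one-dimensional factor of the integrable envelope of the Fourier transform of the bias. -/
noncomputable def weight (α c t : ℝ) : ℝ := (1 + |t|) * Real.exp (-c * |t| ^ α)

lemma weight_nonneg (α c t : ℝ) : 0 ≤ weight α c t := by unfold weight; positivity

lemma sum_mul_exp_le_prod_weight (D : ℕ) (α c : ℝ) (t : Fin D → ℝ) :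
    (∑ j, |t j|) * Real.exp (-c * ∑ j, |t j| ^ α) ≤ ∏ j, weight α c (t j) := by
  simp only [weight, Finset.prod_mul_distrib, ← Real.exp_sum, ← Finset.mul_sum]
  gcongr
  have key : ∀ s : Finset (Fin D), 1 + ∑ j ∈ s, |t j| ≤ ∏ j ∈ s, (1 + |t j|) := by
    intro s
    induction s using Finset.induction_on with
    | empty => simp
    | insert a s ha ih =>
      rw [Finset.prod_insert ha, Finset.sum_insert ha]
      have h1 := abs_nonneg (t a)
      have h2 : 0 ≤ ∑ j ∈ s, |t j| := Finset.sum_nonneg fun j _ => abs_nonneg _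
      nlinarith
  linarith [key Finset.univ]

/-- The squared bias is `O(1 / R²)`: the Fourier transform of the bias is `(K̂_R - 1) p̂`, bounded
by `C₁ / R` times a fixed envelope that is both integrable and square integrable. -/
lemma bias_bound (D : ℕ) {p : (Fin D → ℝ) → ℝ} (hp : Integrable p)
    {α C₁ C₂ : ℝ} (hα : 0 < α) (hC₁ : 0 < C₁) (hC₂ : 0 < C₂)
    (hsuper : ∀ᵐ x : Fin D → ℝ,
      ‖_root_.charFun D p x‖ ≤ C₁ * Real.exp (-C₂ * ∑ j : Fin D, |x j| ^ α)) :
    ∃ B : ℝ, 0 ≤ B ∧ ∀ R : ℝ, 0 < R →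
      ∫ k, (smoothed D R p k - p k) ^ 2 ≤ B / R ^ 2 := by
  let W : (Fin D → ℝ) → ℝ := fun t => ∏ j, weight α C₂ (t j)
  have hW0 : ∀ t, 0 ≤ W t := fun t => Finset.prod_nonneg fun j _ => weight_nonneg _ _ _
  have hW : Integrable W :=
    Integrable.fintype_prod (f := fun _ : Fin D => weight α C₂) fun _ => by
      simpa only [pow_one] using! integrable_one_add_abs_pow_mul_exp hα hC₂ 1
  have hW2 : Integrable fun t => W t ^ 2 := by
    simp only [W, ← Finset.prod_pow]
    refine Integrable.fintype_prod (f := fun _ : Fin D => fun t => weight α C₂ t ^ 2) fun _ => ?_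
    refine (integrable_one_add_abs_pow_mul_exp hα (mul_pos two_pos hC₂) 2).congr
      (Filter.Eventually.of_forall fun t => ?_)
    simp only [weight, mul_pow, ← Real.exp_nat_mul]
    congr 2; push_cast; ring
  refine ⟨((2 * π) ^ D)⁻¹ * (C₁ ^ 2 * ∫ t, W t ^ 2),
    mul_nonneg (by positivity)
      (mul_nonneg (by positivity) (integral_nonneg fun t => sq_nonneg (W t))),
    fun R hR => ?_⟩
  have hb : Integrable fun k => smoothed D R p k - p k := (integrable_smoothed D hR hp).sub hp
  have hbound : ∀ᵐ t, ‖_root_.charFun D (fun k => smoothed D R p k - p k) t‖ ≤ C₁ / R * W t := by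
    filter_upwards [hsuper] with t ht
    rw [charFun_sub D (integrable_smoothed D hR hp) hp, charFun_smoothed D hR hp]
    calc _ = ‖1 - _root_.charFun D (kern D R) t‖ * ‖_root_.charFun D p t‖ := by
          rw [← norm_mul, ← norm_neg]; congr 1; ring
      _ ≤ (∑ j, |t j|) / R * (C₁ * Real.exp (-C₂ * ∑ j : Fin D, |t j| ^ α)) := by
          gcongr
          exact norm_one_sub_charFun_kern_le D hR t
      _ = C₁ / R * ((∑ j, |t j|) * Real.exp (-C₂ * ∑ j : Fin D, |t j| ^ α)) := by ring
      _ ≤ _ := by gcongr; exact sum_mul_exp_le_prod_weight D α C₂ t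
  have hFint : Integrable (_root_.charFun D fun k => smoothed D R p k - p k) :=
    (hW.const_mul _).mono' (continuous_charFun D hb).aestronglyMeasurable hbound
  rw [integral_sq_eq_charFun D hb hFint]
  calc _ ≤ ((2 * π) ^ D)⁻¹ * ∫ t, (C₁ / R) ^ 2 * W t ^ 2 := by
        refine mul_le_mul_of_nonneg_left ?_ (by positivity)
        refine integral_mono_of_nonneg (Filter.Eventually.of_forall fun t => sq_nonneg _)
          (hW2.const_mul _) ?_
        filter_upwards [hbound] with t ht
        rw [← mul_pow]
        exact pow_le_pow_left₀ (norm_nonneg _) ht 2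
    _ = _ := by rw [integral_const_mul]; ring

/-! ### The variance and the bias-variance decomposition -/

lemma continuous_kern (D : ℕ) (R : ℝ) : Continuous (kern D R) :=
  continuous_finsetProd _ fun j _ => (continuous_kern1 R).comp (continuous_apply j)

lemma pEst_eq (D N : ℕ) (R : ℝ) (ks : Fin N → Fin D → ℝ) (k : Fin D → ℝ) :
    pEst D N (fun z => z ^ 2) fejerConst R ks k = (N : ℝ)⁻¹ * ∑ i, kern D R (k - ks i) := by
  simp only [pEst, kern, kern1, Finset.prod_mul_distrib, Finset.prod_const, Finset.card_univ,
    Fintype.card_fin, Pi.sub_apply, ← Finset.mul_sum, div_pow]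
  ring

section Variance

variable {D : ℕ} {R : ℝ} {p : (Fin D → ℝ) → ℝ}

lemma isProbabilityMeasure_density (hp_nonneg : ∀ x, 0 ≤ p x) (hp_int : Integrable p)
    (hp_one : ∫ x : Fin D → ℝ, p x = 1) :
    IsProbabilityMeasure (volume.withDensity fun x => ENNReal.ofReal (p x)) := by
  refine ⟨?_⟩
  rw [withDensity_apply _ MeasurableSet.univ, Measure.restrict_univ,
    ← ofReal_integral_eq_lintegral_ofReal hp_int (Filter.Eventually.of_forall hp_nonneg), hp_one,
    ENNReal.ofReal_one]

lemma integral_density (hp_meas : Measurable p) (hp_nonneg : ∀ x, 0 ≤ p x)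
    (f : (Fin D → ℝ) → ℝ) :
    ∫ x, f x ∂(volume.withDensity fun x => ENNReal.ofReal (p x)) = ∫ x, p x * f x := by
  rw [integral_withDensity_eq_integral_toReal_smul hp_meas.ennreal_ofReal
    (Filter.Eventually.of_forall fun x => ENNReal.ofReal_lt_top)]
  simp [ENNReal.toReal_ofReal (hp_nonneg _)]

lemma integrable_mul_kern (hR : 0 < R) (hp_int : Integrable p) (k : Fin D → ℝ) :
    Integrable fun x => p x * kern D R (k - x) :=
  hp_int.mul_bdd (c := (R / fejerConst) ^ D)
    ((continuous_kern D R).comp (continuous_const.sub continuous_id)).aestronglyMeasurable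
    (Filter.Eventually.of_forall fun x => by
      rw [Real.norm_of_nonneg (kern_nonneg D hR _)]; exact kern_le D hR _)

lemma smoothed_nonneg (hR : 0 < R) (hp_nonneg : ∀ x, 0 ≤ p x) (k : Fin D → ℝ) :
    0 ≤ smoothed D R p k :=
  integral_nonneg fun x => mul_nonneg (hp_nonneg x) (kern_nonneg D hR _)

lemma smoothed_le (hR : 0 < R) (hp_nonneg : ∀ x, 0 ≤ p x) (hp_int : Integrable p)
    (hp_one : ∫ x : Fin D → ℝ, p x = 1) (k : Fin D → ℝ) :
    smoothed D R p k ≤ (R / fejerConst) ^ D := by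
  calc smoothed D R p k ≤ ∫ x, p x * (R / fejerConst) ^ D :=
        integral_mono (integrable_mul_kern hR hp_int k) (hp_int.mul_const _) fun x =>
          mul_le_mul_of_nonneg_left (kern_le D hR _) (hp_nonneg x)
    _ = _ := by rw [integral_mul_const, hp_one, one_mul]

lemma integral_smoothed (hR : 0 < R) (hp_int : Integrable p)
    (hp_one : ∫ x : Fin D → ℝ, p x = 1) : ∫ k, smoothed D R p k = 1 := by
  simp only [smoothed]
  rw [integral_integral_swap (integrable_conv_integrand D hR hp_int)]
  simp only [integral_const_mul]
  simp only [integral_sub_right_eq_self (kern D R), integral_kern D hR, mul_one, hp_one]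

/-- The second moment of the kernel is at most `sup K` times its mean. -/
lemma integral_mul_kern_sq_le (hR : 0 < R) (hp_nonneg : ∀ x, 0 ≤ p x) (hp_int : Integrable p)
    (k : Fin D → ℝ) :
    ∫ x, p x * kern D R (k - x) ^ 2 ≤ (R / fejerConst) ^ D * smoothed D R p k := by
  rw [smoothed, ← integral_const_mul]
  refine integral_mono_of_nonneg
    (Filter.Eventually.of_forall fun x => mul_nonneg (hp_nonneg x) (sq_nonneg _))
    ((integrable_mul_kern hR hp_int k).const_mul _) (Filter.Eventually.of_forall fun x => ?_)
  have h1 := kern_nonneg D hR (k - x)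
  have h2 := kern_le D hR (k - x)
  have h3 := mul_nonneg (hp_nonneg x) h1
  have := mul_le_mul_of_nonneg_right h2 h3
  simp only
  nlinarith

open ProbabilityTheory in
/-- Bias-variance decomposition at a fixed point `k`. -/
lemma pointwise_mse (hR : 0 < R) (hp_meas : Measurable p) (hp_nonneg : ∀ x, 0 ≤ p x)
    (hp_int : Integrable p) (hp_one : ∫ x : Fin D → ℝ, p x = 1) {N : ℕ} (hN : 1 ≤ N)
    (k : Fin D → ℝ) :
    Integrable (fun ks => (pEst D N (fun z => z ^ 2) fejerConst R ks k - p k) ^ 2)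
      (sampleMeasure D N p) ∧
    ∫ ks, (pEst D N (fun z => z ^ 2) fejerConst R ks k - p k) ^ 2 ∂(sampleMeasure D N p) ≤
      (smoothed D R p k - p k) ^ 2 + (R / fejerConst) ^ D / N * smoothed D R p k := by
  set μ := (volume : Measure (Fin D → ℝ)).withDensity fun x => ENNReal.ofReal (p x) with hμ
  have : IsProbabilityMeasure μ := isProbabilityMeasure_density hp_nonneg hp_int hp_one
  have hs : sampleMeasure D N p = Measure.pi fun _ : Fin N => μ := rfl
  have hN0 : (0 : ℝ) < N := by exact_mod_cast hN
  let Y : (Fin D → ℝ) → ℝ := fun x => kern D R (k - x)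
  have hYc : Continuous Y := (continuous_kern D R).comp (continuous_const.sub continuous_id)
  have hY : MemLp Y 2 μ := MemLp.of_bound hYc.aestronglyMeasurable ((R / fejerConst) ^ D)
    (Filter.Eventually.of_forall fun x => by
      rw [Real.norm_of_nonneg (kern_nonneg D hR _)]; exact kern_le D hR _)
  let S : (Fin N → Fin D → ℝ) → ℝ := ∑ i : Fin N, fun ω => Y (ω i)
  have hYi : ∀ i : Fin N, MemLp (fun ω : Fin N → Fin D → ℝ => Y (ω i)) 2
      (Measure.pi fun _ : Fin N => μ) := fun i =>
    hY.comp_measurePreserving (measurePreserving_eval (fun _ : Fin N => μ) i)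
  have hS : MemLp S 2 (Measure.pi fun _ : Fin N => μ) := by
    simpa only [S, Finset.sum_fn] using! memLp_finsetSum' Finset.univ fun i _ => hYi i
  have hEY : ∫ x, Y x ∂μ = smoothed D R p k := integral_density hp_meas hp_nonneg Y
  have hES : ∫ ω, S ω ∂(Measure.pi fun _ : Fin N => μ) = N * smoothed D R p k := by
    simp only [S, Finset.sum_apply]
    rw [integral_finsetSum _ fun i _ => (hYi i).integrable one_le_two]
    have : ∀ i : Fin N, ∫ ω : Fin N → Fin D → ℝ, Y (ω i) ∂(Measure.pi fun _ : Fin N => μ)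
        = smoothed D R p k := fun i => by
      rw [integral_comp_eval (μ := fun _ : Fin N => μ) hYc.aestronglyMeasurable, hEY]
    simp [this]
  have hVS : Var[S; Measure.pi fun _ : Fin N => μ]
      ≤ N * ((R / fejerConst) ^ D * smoothed D R p k) := by
    have hv := variance_sum_pi (μ := fun _ : Fin N => μ) (X := fun _ => Y) fun _ => hY
    change Var[S; _] = _ at hv
    rw [hv, Finset.sum_const, Finset.card_univ, Fintype.card_fin, nsmul_eq_mul]
    refine mul_le_mul_of_nonneg_left ?_ hN0.le
    refine (variance_le_expectation_sq hYc.aestronglyMeasurable).trans ?_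
    simp only [Pi.pow_apply]
    rw [integral_density hp_meas hp_nonneg]
    exact integral_mul_kern_sq_le hR hp_nonneg hp_int k
  let Z : (Fin N → Fin D → ℝ) → ℝ := fun ω => (N : ℝ)⁻¹ * S ω
  have hZ : MemLp Z 2 (Measure.pi fun _ : Fin N => μ) := hS.const_mul _
  have hZk : MemLp (fun ω => Z ω - p k) 2 (Measure.pi fun _ : Fin N => μ) :=
    hZ.sub (memLp_const _)
  have hpe : ∀ ks, pEst D N (fun z => z ^ 2) fejerConst R ks k = Z ks := fun ks => by
    rw [pEst_eq]; simp [Z, S, Y]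
  have hVZ : Var[Z; Measure.pi fun _ : Fin N => μ] ≤
      (R / fejerConst) ^ D / N * smoothed D R p k := by
    simp only [Z]
    rw [variance_const_mul]
    calc _ ≤ ((N : ℝ)⁻¹) ^ 2 * (N * ((R / fejerConst) ^ D * smoothed D R p k)) := by gcongr
      _ = _ := by field_simp
  have hEZ : ∫ ω, (Z ω - p k) ∂(Measure.pi fun _ : Fin N => μ) = smoothed D R p k - p k := by
    rw [integral_sub (hZ.integrable one_le_two) (integrable_const _)]
    simp only [Z]
    rw [integral_const_mul, hES]
    simp [hN0.ne']
  have hdec := variance_eq_sub hZk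
  rw [variance_sub_const hZ.aestronglyMeasurable, hEZ] at hdec
  simp only [hpe, hs]
  refine ⟨hZk.integrable_sq, ?_⟩
  simp only [Pi.pow_apply] at hdec
  linarith

/-- Square integrability of `p` enters here: without it the Bochner integral of the squared bias
would be the junk value `0`. -/
lemma integrable_bias_sq (hR : 0 < R) (hp_meas : Measurable p) (hp_nonneg : ∀ x, 0 ≤ p x)
    (hp_int : Integrable p) (hp_sq : Integrable (fun x => p x ^ 2))
    (hp_one : ∫ x : Fin D → ℝ, p x = 1) :
    Integrable fun k => (smoothed D R p k - p k) ^ 2 := by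
  have hsm := integrable_smoothed D hR hp_int
  have h1 : MemLp (smoothed D R p) 2 := by
    rw [memLp_two_iff_integrable_sq hsm.aestronglyMeasurable]
    refine (hsm.const_mul ((R / fejerConst) ^ D)).mono' (hsm.aestronglyMeasurable.pow 2)
      (Filter.Eventually.of_forall fun k => ?_)
    rw [Real.norm_of_nonneg (sq_nonneg _), sq]
    exact mul_le_mul_of_nonneg_right (smoothed_le hR hp_nonneg hp_int hp_one k)
      (smoothed_nonneg hR hp_nonneg k)
  have h2 : MemLp p 2 := (memLp_two_iff_integrable_sq hp_meas.aestronglyMeasurable).2 hp_sq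
  exact (h1.sub h2).integrable_sq

/-- Tonelli reduces the MISE to the pointwise decomposition. Working with `enorm` and `lintegral`
makes integrability of the inner integral in the sample unnecessary. -/
lemma MISE_le (hR : 0 < R) (hp_meas : Measurable p) (hp_nonneg : ∀ x, 0 ≤ p x)
    (hp_int : Integrable p) (hp_sq : Integrable (fun x => p x ^ 2))
    (hp_one : ∫ x : Fin D → ℝ, p x = 1) {N : ℕ} (hN : 1 ≤ N) :
    MISE D N (fun z => z ^ 2) fejerConst R p ≤
      (∫ k, (smoothed D R p k - p k) ^ 2) + (R / fejerConst) ^ D / N := by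
  have hA := fejerConst_pos
  have : IsProbabilityMeasure (volume.withDensity fun x => ENNReal.ofReal (p x)) :=
    isProbabilityMeasure_density hp_nonneg hp_int hp_one
  have : IsProbabilityMeasure (sampleMeasure D N p) := by unfold sampleMeasure; infer_instance
  let F : (Fin N → Fin D → ℝ) → (Fin D → ℝ) → ℝ := fun ks k =>
    (pEst D N (fun z => z ^ 2) fejerConst R ks k - p k) ^ 2
  have hF : Measurable (Function.uncurry F) := by
    have hk := (continuous_kern D R).measurable
    simp only [F, pEst_eq, Function.uncurry_def]
    fun_prop
  have hbias := integrable_bias_sq hR hp_meas hp_nonneg hp_int hp_sq hp_one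
  have hvar := (integrable_smoothed D hR hp_int).const_mul ((R / fejerConst) ^ D / N)
  have hb0 : 0 ≤ (∫ k, (smoothed D R p k - p k) ^ 2) + (R / fejerConst) ^ D / N :=
    add_nonneg (integral_nonneg fun k => sq_nonneg _) (by positivity)
  have key : ‖MISE D N (fun z => z ^ 2) fejerConst R p‖ₑ ≤
      ENNReal.ofReal ((∫ k, (smoothed D R p k - p k) ^ 2) + (R / fejerConst) ^ D / N) := by
    calc ‖MISE D N (fun z => z ^ 2) fejerConst R p‖ₑ
        ≤ ∫⁻ ks, ‖∫ k, F ks k‖ₑ ∂(sampleMeasure D N p) := enorm_integral_le_lintegral_enorm _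
      _ ≤ ∫⁻ ks, (∫⁻ k, ‖F ks k‖ₑ) ∂(sampleMeasure D N p) :=
        lintegral_mono fun ks => enorm_integral_le_lintegral_enorm _
      _ = ∫⁻ k, ∫⁻ ks, ‖F ks k‖ₑ ∂(sampleMeasure D N p) :=
        lintegral_lintegral_swap hF.enorm.aemeasurable
      _ ≤ ∫⁻ k, ENNReal.ofReal ((smoothed D R p k - p k) ^ 2 +
            (R / fejerConst) ^ D / N * smoothed D R p k) := by
        refine lintegral_mono fun k => ?_
        obtain ⟨hi, hle⟩ := pointwise_mse hR hp_meas hp_nonneg hp_int hp_one hN k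
        rw [← ofReal_integral_norm_eq_lintegral_enorm hi]
        refine ENNReal.ofReal_le_ofReal (le_trans (le_of_eq ?_) hle)
        simp only [Real.norm_of_nonneg (sq_nonneg _)]
      _ = ENNReal.ofReal (∫ k, ((smoothed D R p k - p k) ^ 2 +
            (R / fejerConst) ^ D / N * smoothed D R p k)) := by
        refine (ofReal_integral_eq_lintegral_ofReal (hbias.add hvar)
          (Filter.Eventually.of_forall fun k => ?_)).symm
        have := smoothed_nonneg hR hp_nonneg k
        exact add_nonneg (sq_nonneg _) (mul_nonneg (by positivity) this)
      _ = _ := by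
        rw [integral_add hbias hvar, integral_const_mul, integral_smoothed hR hp_int hp_one,
          mul_one]
  rw [← ofReal_norm, ENNReal.ofReal_le_ofReal_iff hb0] at key
  exact (Real.le_norm_self _).trans key

end Variance

/-- MISE bound for the Fejér-type density estimator (`φ(z) = z²`,
`A = ∫ (sin z / z)² dz`) when the density is supersmooth of order `α`. -/
theorem mise_bound_fejer_supersmooth
    (D : ℕ) (hD : 0 < D)
    (p : (Fin D → ℝ) → ℝ)
    (hp_meas : Measurable p) (hp_nonneg : ∀ x, 0 ≤ p x)
    (hp_int : Integrable p) (hp_sq : Integrable (fun x => p x ^ 2))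
    (hp_one : ∫ x : Fin D → ℝ, p x = 1)
    (α C₁ C₂ : ℝ) (hα : 0 < α) (hC₁ : 0 < C₁) (hC₂ : 0 < C₂)
    (hsuper : ∀ᵐ x : Fin D → ℝ,
      ‖charFun D p x‖ ≤ C₁ * Real.exp (-C₂ * ∑ j : Fin D, |x j| ^ α)) :
    ∃ B₁ B₂ : ℝ, 0 < B₁ ∧ 0 < B₂ ∧
      ∀ R : ℝ, B₁ ≤ R → ∀ N : ℕ, 1 ≤ N →
        MISE D N (fun z => z ^ 2) (∫ z : ℝ, sincLike z ^ 2) R p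
          ≤ B₂ * (1 / R ^ 2 + R ^ D / N) := by

  obtain ⟨B, hB, hbias⟩ := bias_bound D hp_int hα hC₁ hC₂ hsuper
  have hA := fejerConst_pos
  refine ⟨1, B + (fejerConst⁻¹) ^ D, one_pos, by positivity, fun R hR1 N hN => ?_⟩
  have hR : 0 < R := one_pos.trans_le hR1
  have hN0 : (0 : ℝ) < N := by exact_mod_cast hN
  change MISE D N (fun z => z ^ 2) fejerConst R p ≤ _
  refine (MISE_le hR hp_meas hp_nonneg hp_int hp_sq hp_one hN).trans ?_
  have h1 := hbias R hR
  have h2 : (R / fejerConst) ^ D / N = (fejerConst⁻¹) ^ D * (R ^ D / N) := by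
    rw [div_pow, inv_pow]; ring
  have h3 : B / R ^ 2 = B * (1 / R ^ 2) := by ring
  have h4 : 0 ≤ B * (R ^ D / N) := by positivity
  have h5 : 0 ≤ (fejerConst⁻¹) ^ D * (1 / R ^ 2) := by positivity
  rw [h2]
  linarith
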